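/- Let d ≥ 1, let H : ℝ^d → ℝ be smooth and set π(z) = exp(-H(z)). Let D : ℝ^d → (d×d real matrices) be smooth with D(z) symmetric positive semidefinite for every z, and let f : ℝ^d → ℝ^d be a smooth drift. Assume (i) π is a stationary solution of the associated Fokker–Planck equation: for every z, ∑_{i,j=1}^d ∂²/∂z_i∂z_j [D_{ij}(z) π(z)] - ∑_{i=1}^d ∂/∂z_i [f_i(z) π(z)] = 0; and (ii) for each i, the function z ↦ f_i(z) π(z) - ∑_{j=1}^d ∂/∂z_j [D_{ij}(z) π(z)] is Lebesgue integrable on ℝ^d. Then there exists a smooth matrix-valued map Q : ℝ^d → (d×d real matrices) with Q(z) skew-symmetric for every z such that for every i and every z, f_i(z) = -∑_{j=1}^d (D_{ij}(z) + Q_{ij}(z)) ∂H/∂z_j(z) + ∑_{j=1}^d ∂/∂z_j (D_{ij}(z) + Q_{ij}(z)); equivalently, f_i(z) π(z) = ∑_{j=1}^d ∂/∂z_j [ (D_{ij}(z) + Q_{ij}(z)) π(z) ]. -/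

import Mathlib

/-!
Stationarity says that the probability current `J i = f i * π - ∑ j, ∂ j (D i j * π)` is
divergence free. If `J` is the row-wise divergence of a skew-symmetric matrix field `A`, then
`Q = exp H • A` satisfies `f i * π = ∑ j, ∂ j ((D i j + Q i j) * π)`, and dividing by `π` gives the
recipe.

In dimension `d ≥ 2` the Poincaré homotopy provides `A` for every divergence-free field: with
`B i z = ∫ t in 0..1, t ^ (d - 2) * J i (t • z)` take `A i j z = B i z * z j - B j z * z i`. The
field `B` is again divergence free, so the divergence of row `i` is `(z · ∇) B i + (d - 1) * B i`,
and integrating `d/dt (t ^ (d - 1) * J i (t • z))` over `[0, 1]` shows that this is `J i`. In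
dimension one a divergence-free field is constant, hence zero if it is integrable.
-/

open scoped BigOperators
open Matrix MeasureTheory

/-- Classical partial derivative in the `i`-th coordinate direction. -/
noncomputable def pd {ι : Type*} [Fintype ι] [DecidableEq ι]
    (i : ι) (f : (ι → ℝ) → ℝ) (z : ι → ℝ) : ℝ :=
  fderiv ℝ f z (Pi.single i 1)

section PartialDerivatives

variable {ι : Type*} [Fintype ι] [DecidableEq ι] {g h : (ι → ℝ) → ℝ} {z : ι → ℝ}

theorem contDiff_pd {k : WithTop ℕ∞} (i : ι) (hg : ContDiff ℝ (k + 1) g) :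
    ContDiff ℝ k (pd i g) :=
  (hg.fderiv_right le_rfl).clm_apply contDiff_const

theorem pd_add (i : ι) (hg : DifferentiableAt ℝ g z) (hh : DifferentiableAt ℝ h z) :
    pd i (fun w => g w + h w) z = pd i g z + pd i h z := by
  simp only [pd, fderiv_fun_add hg hh, _root_.add_apply]

theorem pd_sub (i : ι) (hg : DifferentiableAt ℝ g z) (hh : DifferentiableAt ℝ h z) :
    pd i (fun w => g w - h w) z = pd i g z - pd i h z := by
  simp only [pd, fderiv_fun_sub hg hh, _root_.sub_apply]

theorem pd_mul (i : ι) (hg : DifferentiableAt ℝ g z) (hh : DifferentiableAt ℝ h z) :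
    pd i (fun w => g w * h w) z = g z * pd i h z + h z * pd i g z := by
  simp only [pd, fderiv_fun_mul hg hh, _root_.add_apply,
    _root_.smul_apply, smul_eq_mul]

theorem pd_sum {κ : Type*} (i : ι) (s : Finset κ) {g : κ → (ι → ℝ) → ℝ}
    (hg : ∀ j ∈ s, DifferentiableAt ℝ (g j) z) :
    pd i (fun w => ∑ j ∈ s, g j w) z = ∑ j ∈ s, pd i (g j) z := by
  simp only [pd, fderiv_fun_sum hg, _root_.sum_apply]

theorem pd_coord (i j : ι) (z : ι → ℝ) :
    pd i (fun w : ι → ℝ => w j) z = if j = i then 1 else 0 := by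
  have hcoord : HasFDerivAt (fun w : ι → ℝ => w j) (ContinuousLinearMap.proj j) z :=
    hasFDerivAt_apply (𝕜 := ℝ) j z
  rw [pd, hcoord.fderiv, ContinuousLinearMap.proj_apply, Pi.single_apply]

theorem pd_exp_neg (i : ι) (hg : DifferentiableAt ℝ g z) :
    pd i (fun w => Real.exp (-g w)) z = -pd i g z * Real.exp (-g z) := by
  have hexp : HasFDerivAt (fun w => Real.exp (-g w)) (Real.exp (-g z) • -fderiv ℝ g z) z :=
    hg.hasFDerivAt.fun_neg.exp
  rw [pd, hexp.fderiv, _root_.smul_apply, _root_.neg_apply, smul_eq_mul, mul_comm, pd]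

theorem fderiv_apply_eq_sum_pd (g : (ι → ℝ) → ℝ) (z v : ι → ℝ) :
    fderiv ℝ g z v = ∑ j, v j * pd j g z := by
  conv_lhs => rw [pi_eq_sum_univ' v]
  simp only [map_sum, map_smul, smul_eq_mul, pd]

end PartialDerivatives

section RadialIntegral

variable {E F : Type*} [NormedAddCommGroup E] [NormedSpace ℝ E]
  [NormedAddCommGroup F] [NormedSpace ℝ F]

/-- The weighted integral `∫₀¹ tⁿ g(t z) dt` of `g` along the segment from the origin to `z`: the
homotopy operator of the Poincaré lemma applied to the coefficients of a differential form. -/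
noncomputable def radialIntegral (n : ℕ) (g : E → F) (z : E) : F :=
  ∫ t in (0 : ℝ)..1, t ^ n • g (t • z)

theorem continuous_pow_smul_comp_smul (n : ℕ) {g : E → F} (hg : Continuous g) (z : E) :
    Continuous fun t : ℝ => t ^ n • g (t • z) := by
  fun_prop

theorem radialIntegral_sum {κ : Type*} (n : ℕ) (s : Finset κ) {g : κ → E → F}
    (hg : ∀ j ∈ s, Continuous (g j)) (z : E) :
    radialIntegral n (fun w => ∑ j ∈ s, g j w) z = ∑ j ∈ s, radialIntegral n (g j) z := by
  simp only [radialIntegral, Finset.smul_sum]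
  exact intervalIntegral.integral_finsetSum fun j hj =>
    (continuous_pow_smul_comp_smul n (hg j hj) z).intervalIntegrable 0 1

theorem hasFDerivAt_pow_smul_comp_smul (n : ℕ) {g : E → F} (hg : Differentiable ℝ g) (t : ℝ)
    (z : E) :
    HasFDerivAt (fun w => t ^ n • g (t • w)) (t ^ (n + 1) • fderiv ℝ g (t • z)) z := by
  have hscale : HasFDerivAt (fun w : E => t • w) (t • ContinuousLinearMap.id ℝ E) z :=
    (hasFDerivAt_id z).const_smul t
  refine (((hg (t • z)).hasFDerivAt.comp z hscale).const_smul (t ^ n)).congr_fderiv ?_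
  rw [ContinuousLinearMap.comp_smul, ContinuousLinearMap.comp_id, smul_smul, pow_succ]

theorem hasFDerivAt_radialIntegral [FiniteDimensional ℝ E] (n : ℕ) {g : E → F}
    (hg : ContDiff ℝ 1 g) (z : E) :
    HasFDerivAt (radialIntegral n g) (radialIntegral (n + 1) (fderiv ℝ g) z) z := by
  have : ProperSpace E := FiniteDimensional.proper ℝ E
  have hg' : Continuous (fderiv ℝ g) := hg.continuous_fderiv one_ne_zero
  have hjoint : Continuous fun p : E × ℝ => p.2 ^ (n + 1) • fderiv ℝ g (p.2 • p.1) := by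
    fun_prop
  obtain ⟨C, hC⟩ := ((isCompact_closedBall z 1).prod
    (isCompact_Icc (a := (0 : ℝ)) (b := 1))).exists_bound_of_continuousOn hjoint.continuousOn
  refine intervalIntegral.hasFDerivAt_integral_of_dominated_of_fderiv_le
    (F' := fun w t => t ^ (n + 1) • fderiv ℝ g (t • w)) (bound := fun _ => C)
    (Metric.closedBall_mem_nhds z one_pos)
    (.of_forall fun w =>
      (continuous_pow_smul_comp_smul n hg.continuous w).aestronglyMeasurable)
    ((continuous_pow_smul_comp_smul n hg.continuous z).intervalIntegrable 0 1)
    (continuous_pow_smul_comp_smul (n + 1) hg' z).aestronglyMeasurable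
    (.of_forall fun t ht w hw => hC (w, t) ⟨hw, ?_⟩)
    intervalIntegrable_const
    (.of_forall fun t _ w _ =>
      hasFDerivAt_pow_smul_comp_smul n (hg.differentiable one_ne_zero) t w)
  rw [Set.uIoc_of_le zero_le_one] at ht
  exact Set.Ioc_subset_Icc_self ht

theorem radialIntegral_clm_apply (n : ℕ) {L : E → E →L[ℝ] F} (hL : Continuous L) (z v : E) :
    radialIntegral n L z v = radialIntegral n (fun w => L w v) z :=
  ContinuousLinearMap.intervalIntegral_apply
    ((continuous_pow_smul_comp_smul n hL z).intervalIntegrable 0 1) v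

theorem fderiv_radialIntegral_apply [FiniteDimensional ℝ E] (n : ℕ) {g : E → F}
    (hg : ContDiff ℝ 1 g) (z v : E) :
    fderiv ℝ (radialIntegral n g) z v = radialIntegral (n + 1) (fun w => fderiv ℝ g w v) z := by
  rw [(hasFDerivAt_radialIntegral n hg z).fderiv,
    radialIntegral_clm_apply _ (hg.continuous_fderiv one_ne_zero)]

theorem contDiff_natCast_radialIntegral [FiniteDimensional ℝ E] (n k : ℕ) {g : E → F}
    (hg : ContDiff ℝ k g) : ContDiff ℝ k (radialIntegral n g) := by
  induction k generalizing n g with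
  | zero =>
    have hg' : Continuous g := hg.continuous
    exact contDiff_zero.2 <|
      intervalIntegral.continuous_parametric_intervalIntegral_of_continuous' (by fun_prop) 0 1
  | succ k ih =>
    rw [Nat.cast_succ] at hg ⊢
    have hg₁ : ContDiff ℝ 1 g := hg.of_le le_add_self
    -- Evaluating the derivative at `v` keeps the codomain `F` (and its universe) in the induction.
    refine contDiff_succ_iff_fderiv_apply.2
      ⟨fun z => (hasFDerivAt_radialIntegral n hg₁ z).differentiableAt, by simp, fun v => ?_⟩
    simp only [fderiv_radialIntegral_apply n hg₁]
    exact ih (n + 1) ((hg.fderiv_right le_rfl).clm_apply contDiff_const)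

theorem contDiff_radialIntegral [FiniteDimensional ℝ E] (n : ℕ) {g : E → F} {k : ℕ∞}
    (hg : ContDiff ℝ k g) : ContDiff ℝ k (radialIntegral n g) :=
  contDiff_iff_forall_nat_le.2 fun m hm =>
    contDiff_natCast_radialIntegral n m (hg.of_le (by exact_mod_cast hm))

theorem fderiv_radialIntegral_self [FiniteDimensional ℝ E] [CompleteSpace F] (n : ℕ) {g : E → F}
    (hg : ContDiff ℝ 1 g) (z : E) :
    fderiv ℝ (radialIntegral n g) z z + (n + 1 : ℝ) • radialIntegral n g z = g z := by
  have hderiv : ∀ t : ℝ, HasDerivAt (fun t : ℝ => t ^ (n + 1) • g (t • z))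
      (t ^ (n + 1) • fderiv ℝ g (t • z) z + (n + 1 : ℝ) • t ^ n • g (t • z)) t := by
    intro t
    have hray : HasDerivAt (fun t : ℝ => t • z) z t := by
      simpa only [id_eq, one_smul] using (hasDerivAt_id t).smul_const z
    have hg' := (hg.differentiable one_ne_zero (t • z)).hasFDerivAt.comp_hasDerivAt t hray
    refine ((hasDerivAt_pow (n + 1) t).smul hg').congr_deriv ?_
    simp only [Function.comp_apply, Nat.cast_succ, Nat.add_sub_cancel, mul_smul]
  have hcont : Continuous fun w => fderiv ℝ g w z :=
    (hg.continuous_fderiv one_ne_zero).clm_apply continuous_const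
  have hint₁ : IntervalIntegrable (fun t : ℝ => t ^ (n + 1) • fderiv ℝ g (t • z) z)
      volume 0 1 := (continuous_pow_smul_comp_smul (n + 1) hcont z).intervalIntegrable 0 1
  have hint₂ : IntervalIntegrable (fun t : ℝ => (n + 1 : ℝ) • t ^ n • g (t • z)) volume 0 1 :=
    ((continuous_pow_smul_comp_smul n hg.continuous z).const_smul _).intervalIntegrable 0 1
  calc
    fderiv ℝ (radialIntegral n g) z z + (n + 1 : ℝ) • radialIntegral n g z
      = ∫ t in (0 : ℝ)..1,
          (t ^ (n + 1) • fderiv ℝ g (t • z) z + (n + 1 : ℝ) • t ^ n • g (t • z)) := by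
        rw [fderiv_radialIntegral_apply n hg, intervalIntegral.integral_add hint₁ hint₂,
          intervalIntegral.integral_smul, radialIntegral, radialIntegral]
    _ = (1 : ℝ) ^ (n + 1) • g ((1 : ℝ) • z) - (0 : ℝ) ^ (n + 1) • g ((0 : ℝ) • z) :=
        intervalIntegral.integral_eq_sub_of_hasDerivAt (fun t _ => hderiv t) (hint₁.add hint₂)
    _ = g z := by
        rw [one_pow, one_smul, one_smul, zero_pow n.succ_ne_zero, zero_smul, sub_zero]

end RadialIntegral

section DivergenceFree

variable {ι : Type*} [Fintype ι] {J : ι → (ι → ℝ) → ℝ}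

/-- The skew-symmetric field given by the Poincaré homotopy for the vector field `J` on `ℝ^d`,
`d = card ι`; its row divergence is `J` when `J` is divergence free and `d ≥ 2`. The exponent is a
truncated subtraction, so the definition is only meaningful in that range. -/
noncomputable def skewPotential (J : ι → (ι → ℝ) → ℝ) (z : ι → ℝ) : Matrix ι ι ℝ :=
  Matrix.of fun i j => radialIntegral (Fintype.card ι - 2) (J i) z * z j
    - radialIntegral (Fintype.card ι - 2) (J j) z * z i

theorem transpose_skewPotential (J : ι → (ι → ℝ) → ℝ) (z : ι → ℝ) :
    (skewPotential J z)ᵀ = -skewPotential J z := by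
  ext i j
  exact (neg_sub _ _).symm

theorem contDiff_skewPotential {k : ℕ∞} (hJ : ∀ i, ContDiff ℝ k (J i)) (i j : ι) :
    ContDiff ℝ k fun z => skewPotential J z i j :=
  ((contDiff_radialIntegral _ (hJ i)).mul (contDiff_apply ℝ ℝ j)).sub
    ((contDiff_radialIntegral _ (hJ j)).mul (contDiff_apply ℝ ℝ i))

variable [DecidableEq ι]

theorem pd_radialIntegral (n : ℕ) (j : ι) {g : (ι → ℝ) → ℝ} (hg : ContDiff ℝ 1 g)
    (z : ι → ℝ) : pd j (radialIntegral n g) z = radialIntegral (n + 1) (pd j g) z :=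
  fderiv_radialIntegral_apply n hg z (Pi.single j 1)

theorem sum_pd_radialIntegral_eq_zero (n : ℕ) (hJ : ∀ i, ContDiff ℝ 1 (J i))
    (hdiv : ∀ z, ∑ i, pd i (J i) z = 0) (z : ι → ℝ) :
    ∑ i, pd i (radialIntegral n (J i)) z = 0 := by
  have hpd : ∀ i ∈ Finset.univ, Continuous (pd i (J i)) := fun i _ =>
    (contDiff_pd (k := 0) i (by simpa only [zero_add] using hJ i)).continuous
  calc
    ∑ i, pd i (radialIntegral n (J i)) z = ∑ i, radialIntegral (n + 1) (pd i (J i)) z :=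
      Finset.sum_congr rfl fun i _ => pd_radialIntegral n i (hJ i) z
    _ = radialIntegral (n + 1) (fun w => ∑ i, pd i (J i) w) z :=
      (radialIntegral_sum (n + 1) Finset.univ hpd z).symm
    _ = 0 := by
      simp only [hdiv, radialIntegral, smul_zero, intervalIntegral.integral_zero]

theorem pd_skewPotential (hJ : ∀ i, ContDiff ℝ 1 (J i)) (i j : ι) (z : ι → ℝ) :
    pd j (fun w => skewPotential J w i j) z =
      z j * pd j (radialIntegral (Fintype.card ι - 2) (J i)) z
        + radialIntegral (Fintype.card ι - 2) (J i) z
        - z i * pd j (radialIntegral (Fintype.card ι - 2) (J j)) z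
        - if i = j then radialIntegral (Fintype.card ι - 2) (J j) z else 0 := by
  have hB : ∀ l, DifferentiableAt ℝ (radialIntegral (Fintype.card ι - 2) (J l)) z := fun l =>
    (hasFDerivAt_radialIntegral _ (hJ l) z).differentiableAt
  have hcoord : ∀ l, DifferentiableAt ℝ (fun w : ι → ℝ => w l) z := fun l =>
    differentiableAt_apply l z
  simp only [skewPotential, Matrix.of_apply]
  rw [pd_sub j ((hB i).fun_mul (hcoord j)) ((hB j).fun_mul (hcoord i)), pd_mul j (hB i) (hcoord j),
    pd_mul j (hB j) (hcoord i), pd_coord, pd_coord]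
  simp only [if_true, mul_ite, mul_one, mul_zero]
  ring

theorem sum_pd_skewPotential [Nontrivial ι] (hJ : ∀ i, ContDiff ℝ 1 (J i))
    (hdiv : ∀ z, ∑ i, pd i (J i) z = 0) (i : ι) (z : ι → ℝ) :
    ∑ j, pd j (fun w => skewPotential J w i j) z = J i z := by
  obtain ⟨n, hn⟩ : ∃ n, Fintype.card ι = n + 2 :=
    Nat.exists_eq_add_of_le' Fintype.one_lt_card
  calc
    ∑ j, pd j (fun w => skewPotential J w i j) z
      = fderiv ℝ (radialIntegral n (J i)) z z + (n + 2 : ℝ) * radialIntegral n (J i) z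
          - z i * ∑ j, pd j (radialIntegral n (J j)) z - radialIntegral n (J i) z := by
        simp only [pd_skewPotential hJ, Finset.sum_sub_distrib, Finset.sum_add_distrib,
          ← fderiv_apply_eq_sum_pd, ← Finset.mul_sum, Finset.sum_const, Finset.card_univ, hn,
          Nat.add_sub_cancel, nsmul_eq_mul, Finset.sum_ite_eq, Finset.mem_univ, if_true,
          Nat.cast_add, Nat.cast_ofNat]
    _ = fderiv ℝ (radialIntegral n (J i)) z z + (n + 1 : ℝ) • radialIntegral n (J i) z := by
        rw [sum_pd_radialIntegral_eq_zero n hJ hdiv, smul_eq_mul]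
        ring
    _ = J i z := fderiv_radialIntegral_self n (hJ i) z

theorem eq_zero_of_fderiv_eq_zero_of_integrable {E F : Type*} [NormedAddCommGroup E]
    [NormedSpace ℝ E] [MeasurableSpace E] {μ : Measure E} [NormedAddCommGroup F]
    [NormedSpace ℝ F] {g : E → F} (hμ : ¬IsFiniteMeasure μ) (hg : Differentiable ℝ g)
    (hg' : ∀ z, fderiv ℝ g z = 0) (hint : Integrable g μ) (z : E) : g z = 0 := by
  have hconst : g = fun _ => g z := funext fun w => is_const_of_fderiv_eq_zero hg hg' w z
  rw [hconst, integrable_const_iff] at hint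
  exact hint.resolve_right hμ

theorem eq_zero_of_sum_pd_eq_zero_of_integrable [Subsingleton ι]
    (hJ : ∀ i, Differentiable ℝ (J i)) (hdiv : ∀ z, ∑ i, pd i (J i) z = 0)
    (hint : ∀ i, Integrable (J i)) (i : ι) (z : ι → ℝ) : J i z = 0 := by
  have : Nonempty ι := ⟨i⟩
  have : NoncompactSpace (ι → ℝ) := NormedSpace.noncompactSpace ℝ (ι → ℝ)
  have hinfinite : ¬IsFiniteMeasure (volume : Measure (ι → ℝ)) := fun h =>
    h.measure_univ_lt_top.ne (measure_univ_of_isAddLeftInvariant volume)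
  refine eq_zero_of_fderiv_eq_zero_of_integrable hinfinite (hJ i) (fun w => ?_) (hint i) z
  have hpd : pd i (J i) w = 0 := by
    simpa only [Fintype.sum_subsingleton _ i] using hdiv w
  ext v
  rw [fderiv_apply_eq_sum_pd, Fintype.sum_subsingleton _ i, hpd, mul_zero, _root_.zero_apply]

theorem exists_contDiff_skew_of_sum_pd_eq_zero {k : ℕ∞} (hk : 1 ≤ k)
    (hJ : ∀ i, ContDiff ℝ k (J i)) (hdiv : ∀ z, ∑ i, pd i (J i) z = 0)
    (hint : Subsingleton ι → ∀ i, Integrable (J i)) :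
    ∃ A : (ι → ℝ) → Matrix ι ι ℝ, (∀ i j, ContDiff ℝ k fun z => A z i j) ∧
      (∀ z, (A z)ᵀ = -A z) ∧ ∀ i z, ∑ j, pd j (fun w => A w i j) z = J i z := by
  have hJ₁ : ∀ i, ContDiff ℝ 1 (J i) := fun i => (hJ i).of_le (by exact_mod_cast hk)
  rcases subsingleton_or_nontrivial ι with hι | hι
  · have hzero := eq_zero_of_sum_pd_eq_zero_of_integrable
      (fun i => (hJ₁ i).differentiable one_ne_zero) hdiv (hint hι)
    refine ⟨0, fun _ _ => contDiff_const, fun z => by simp, fun i z => ?_⟩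
    simp [hzero, pd]
  · exact ⟨skewPotential J, contDiff_skewPotential hJ, transpose_skewPotential J,
      sum_pd_skewPotential hJ₁ hdiv⟩

end DivergenceFree

section Recipe

variable {ι : Type*} [Fintype ι] [DecidableEq ι] {H : (ι → ℝ) → ℝ}
  {D : (ι → ℝ) → Matrix ι ι ℝ} {f : (ι → ℝ) → ι → ℝ}

/-- The probability current `f π - ∇ · (D π)` of the diffusion with drift `f` and diffusion matrix
`D` in the density `π = exp (-H)`; the Fokker–Planck equation at `π` says that its divergence
vanishes. -/
noncomputable def probabilityCurrent (H : (ι → ℝ) → ℝ) (D : (ι → ℝ) → Matrix ι ι ℝ)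
    (f : (ι → ℝ) → ι → ℝ) (i : ι) (z : ι → ℝ) : ℝ :=
  f z i * Real.exp (-H z) - ∑ j, pd j (fun w => D w i j * Real.exp (-H w)) z

theorem contDiff_probabilityCurrent {k : WithTop ℕ∞} (hH : ContDiff ℝ (k + 1) H)
    (hD : ∀ i j, ContDiff ℝ (k + 1) fun z => D z i j)
    (hf : ∀ i, ContDiff ℝ k fun z => f z i) (i : ι) :
    ContDiff ℝ k (probabilityCurrent H D f i) :=
  ((hf i).mul (hH.of_le le_self_add).neg.exp).sub <|
    ContDiff.sum fun j _ => contDiff_pd j ((hD i j).mul hH.neg.exp)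

theorem sum_pd_probabilityCurrent (hH : ContDiff ℝ 2 H)
    (hD : ∀ i j, ContDiff ℝ 2 fun z => D z i j)
    (hf : ∀ i, Differentiable ℝ fun z => f z i) (z : ι → ℝ) :
    ∑ i, pd i (probabilityCurrent H D f i) z =
      ∑ i, pd i (fun w => f w i * Real.exp (-H w)) z
        - ∑ i, ∑ j, pd i (fun w => pd j (fun u => D u i j * Real.exp (-H u)) w) z := by
  have hπ : DifferentiableAt ℝ (fun w => Real.exp (-H w)) z :=
    hH.neg.exp.differentiable two_ne_zero z
  have hDπ : ∀ i j, DifferentiableAt ℝ (pd j fun w => D w i j * Real.exp (-H w)) z := fun i j =>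
    (contDiff_pd (k := 1) j
      (by simpa only [one_add_one_eq_two] using (hD i j).mul hH.neg.exp)).differentiable
      one_ne_zero z
  rw [← Finset.sum_sub_distrib]
  refine Finset.sum_congr rfl fun i _ => ?_
  unfold probabilityCurrent
  rw [pd_sub i ((hf i z).fun_mul hπ) (.fun_sum fun j _ => hDπ i j),
    pd_sum i Finset.univ fun j _ => hDπ i j]

theorem sum_pd_mul_exp_neg {M : (ι → ℝ) → Matrix ι ι ℝ} {z : ι → ℝ}
    (hH : DifferentiableAt ℝ H z) (i : ι) (hM : ∀ j, DifferentiableAt ℝ (fun w => M w i j) z) :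
    ∑ j, pd j (fun w => M w i j * Real.exp (-H w)) z =
      (-∑ j, M z i j * pd j H z + ∑ j, pd j (fun w => M w i j) z) * Real.exp (-H z) := by
  rw [← Finset.sum_neg_distrib, ← Finset.sum_add_distrib, Finset.sum_mul]
  refine Finset.sum_congr rfl fun j _ => ?_
  rw [pd_mul j (hM j) hH.fun_neg.exp, pd_exp_neg j hH]
  ring

theorem sum_pd_add_exp_mul_mul_exp_neg {A : (ι → ℝ) → Matrix ι ι ℝ} {z : ι → ℝ}
    (hH : DifferentiableAt ℝ H z) (i : ι) (hD : ∀ j, DifferentiableAt ℝ (fun w => D w i j) z)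
    (hA : ∀ j, DifferentiableAt ℝ (fun w => A w i j) z) :
    ∑ j, pd j (fun w => (D w i j + Real.exp (H w) * A w i j) * Real.exp (-H w)) z =
      ∑ j, pd j (fun w => D w i j * Real.exp (-H w)) z + ∑ j, pd j (fun w => A w i j) z := by
  have hcancel : ∀ j w, (D w i j + Real.exp (H w) * A w i j) * Real.exp (-H w) =
      D w i j * Real.exp (-H w) + A w i j := by
    intro j w
    rw [add_mul, mul_right_comm, ← Real.exp_add, add_neg_cancel, Real.exp_zero, one_mul]
  simp only [hcancel, ← Finset.sum_add_distrib]
  exact Finset.sum_congr rfl fun j _ => pd_add j ((hD j).mul hH.fun_neg.exp) (hA j)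

end Recipe

theorem complete_recipe_general {ι : Type*} [Fintype ι] [DecidableEq ι] {k : ℕ∞} (hk : 1 ≤ k)
    {H : (ι → ℝ) → ℝ} (hH : ContDiff ℝ (k + 1) H)
    {D : (ι → ℝ) → Matrix ι ι ℝ} (hD : ∀ i j, ContDiff ℝ (k + 1) fun z => D z i j)
    {f : (ι → ℝ) → ι → ℝ} (hf : ∀ i, ContDiff ℝ k fun z => f z i)
    (hstat : ∀ z : ι → ℝ,
      ∑ i, ∑ j, pd i (fun w => pd j (fun u => D u i j * Real.exp (-H u)) w) z
        - ∑ i, pd i (fun w => f w i * Real.exp (-H w)) z = 0)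
    (hint : Subsingleton ι → ∀ i, Integrable (probabilityCurrent H D f i)) :
    ∃ Q : (ι → ℝ) → Matrix ι ι ℝ,
      (∀ i j, ContDiff ℝ k fun z => Q z i j) ∧
      (∀ z, (Q z)ᵀ = -Q z) ∧
      (∀ i z, f z i = -∑ j, (D z i j + Q z i j) * pd j H z
        + ∑ j, pd j (fun w => D w i j + Q w i j) z) ∧
      (∀ i z, f z i * Real.exp (-H z) =
        ∑ j, pd j (fun w => (D w i j + Q w i j) * Real.exp (-H w)) z) := by
  have hk₁ : (1 : WithTop ℕ∞) ≤ k := by exact_mod_cast hk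
  have hk₀ : (k : WithTop ℕ∞) ≠ 0 := (zero_lt_one.trans_le hk₁).ne'
  have hk₂ : (2 : WithTop ℕ∞) ≤ k + 1 := one_add_one_eq_two.symm.trans_le (by gcongr)
  have hH' := hH.differentiable (by simp)
  have hD' := fun i j => (hD i j).differentiable (by simp)
  have hdiv : ∀ z, ∑ i, pd i (probabilityCurrent H D f i) z = 0 := fun z => by
    rw [sum_pd_probabilityCurrent (hH.of_le hk₂) (fun i j => (hD i j).of_le hk₂)
      fun i => (hf i).differentiable hk₀]
    linarith [hstat z]
  obtain ⟨A, hA, hskew, hAdiv⟩ := exists_contDiff_skew_of_sum_pd_eq_zero hk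
    (contDiff_probabilityCurrent hH hD hf) hdiv hint
  have hQ : ∀ i j, ContDiff ℝ k fun z => (Real.exp (H z) • A z) i j := fun i j =>
    (hH.of_le le_self_add).exp.mul (hA i j)
  have hflux : ∀ i z, f z i * Real.exp (-H z) =
      ∑ j, pd j (fun w => (D w i j + (Real.exp (H w) • A w) i j) * Real.exp (-H w)) z := by
    intro i z
    simp only [Matrix.smul_apply, smul_eq_mul]
    rw [sum_pd_add_exp_mul_mul_exp_neg (hH' z) i (fun j => hD' i j z)
      fun j => (hA i j).differentiable hk₀ z, hAdiv, probabilityCurrent, add_sub_cancel]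
  refine ⟨fun z => Real.exp (H z) • A z, hQ, fun z => ?_, fun i z => ?_, hflux⟩
  · rw [Matrix.transpose_smul, hskew, smul_neg]
  · refine mul_right_cancel₀ (Real.exp_ne_zero (-H z)) ((hflux i z).trans ?_)
    exact sum_pd_mul_exp_neg (M := fun w => D w + Real.exp (H w) • A w) (hH' z) i
      fun j => (hD' i j z).add ((hQ i j).differentiable hk₀ z)

/-- Completeness of the recipe (Theorem 1): any diffusion with stationary density
`π = exp (-H)` and an integrability condition can be written in the complete-recipe
form for some smooth skew-symmetric `Q`. -/
theorem complete_recipe {d : ℕ} (hd : 1 ≤ d)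
    (H : (Fin d → ℝ) → ℝ) (hH : ContDiff ℝ (⊤ : ℕ∞) H)
    (D : (Fin d → ℝ) → Matrix (Fin d) (Fin d) ℝ)
    (hD : ∀ i j, ContDiff ℝ (⊤ : ℕ∞) (fun z => D z i j))
    (hDpsd : ∀ z, (D z).PosSemidef)
    (f : (Fin d → ℝ) → Fin d → ℝ)
    (hf : ∀ i, ContDiff ℝ (⊤ : ℕ∞) (fun z => f z i))
    (hstat : ∀ z : Fin d → ℝ,
      ∑ i, ∑ j, pd i (fun w => pd j (fun u => D u i j * Real.exp (-H u)) w) z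
        - ∑ i, pd i (fun w => f w i * Real.exp (-H w)) z = 0)
    (hInt : ∀ i, Integrable
      (fun z => f z i * Real.exp (-H z)
        - ∑ j, pd j (fun w => D w i j * Real.exp (-H w)) z)
      (volume : Measure (Fin d → ℝ))) :
    ∃ Q : (Fin d → ℝ) → Matrix (Fin d) (Fin d) ℝ,
      (∀ i j, ContDiff ℝ (⊤ : ℕ∞) (fun z => Q z i j)) ∧
      (∀ z, (Q z)ᵀ = -Q z) ∧
      (∀ i (z : Fin d → ℝ), f z i =
        -∑ j, (D z i j + Q z i j) * pd j H z
          + ∑ j, pd j (fun w => D w i j + Q w i j) z) ∧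
      (∀ i (z : Fin d → ℝ), f z i * Real.exp (-H z) =
        ∑ j, pd j (fun w => (D w i j + Q w i j) * Real.exp (-H w)) z) := by
  exact complete_recipe_general le_top hH hD hf hstat fun _ => hInt
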